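/- arXiv:1306.5829 — 2 statements merged into one kernel-verified Lean document; each statement's English description precedes it below -/
import Mathlib

section
/- Let n ≥ 2, let 0 < σ ≤ 1, let K ⊆ ℝⁿ be a convex body containing the unit ball B_n centered at the origin, and let f be the probability density proportional to e^{−‖x‖²/(2σ²)} restricted to K. If 0 < δ ≤ σ/(4096√n), then the average local conductance satisfies λ(f) = ∫_K ℓ(x) f(x) dx ≥ 1/2, where ℓ(x) = vol(K ∩ (x + δB_n))/vol(δB_n). -/
open MeasureTheory Real Set Metric

lemma mgf_eq_of_norm_eq {n : ℕ} (δ : ℝ) (v w : EuclideanSpace ℝ (Fin n)) (h : ‖v‖ = ‖w‖) :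
    ∫⁻ u in closedBall (0 : EuclideanSpace ℝ (Fin n)) δ, ENNReal.ofReal (exp (inner ℝ v u)) =
    ∫⁻ u in closedBall (0 : EuclideanSpace ℝ (Fin n)) δ, ENNReal.ofReal (exp (inner ℝ w u)) := by
  set T := (ℝ ∙ (v - w))ᗮ.reflection with hT
  have hTv : T v = w := Submodule.reflection_sub h
  symm
  rw [← (LinearIsometryEquiv.measurePreserving T).setLIntegral_comp_preimage_emb
    T.toHomeomorph.measurableEmbedding]
  have : T ⁻¹' closedBall (0 : EuclideanSpace ℝ (Fin n)) δ = closedBall 0 δ := by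
    ext x; simp
  rw [this]
  simp only [← hTv, LinearIsometryEquiv.inner_map_map]

lemma mgf_le {n : ℕ} (hn : 0 < n) (δ : ℝ) (v : EuclideanSpace ℝ (Fin n)) :
    ∫⁻ u in closedBall (0 : EuclideanSpace ℝ (Fin n)) δ, ENNReal.ofReal (exp (inner ℝ v u)) ≤
    ENNReal.ofReal (exp (‖v‖ ^ 2 * δ ^ 2 / (2 * n))) *
      volume (closedBall (0 : EuclideanSpace ℝ (Fin n)) δ) := by
  have hn' : (0 : ℝ) < n := by exact_mod_cast hn
  set c : ℝ := ‖v‖ / √n with hc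
  have hc2 : n * c ^ 2 = ‖v‖ ^ 2 := by
    rw [hc, div_pow, Real.sq_sqrt hn'.le]; field_simp
  let sg : Bool → ℝ := fun b => if b then c else -c
  have hsg : ∀ b, sg b ^ 2 = c ^ 2 := by intro b; cases b <;> simp [sg]
  let w : (Fin n → Bool) → EuclideanSpace ℝ (Fin n) := fun e => WithLp.toLp 2 (fun i => sg (e i))
  have hw : ∀ e, ‖v‖ = ‖w e‖ := by
    intro e
    rw [← sq_eq_sq₀ (norm_nonneg _) (norm_nonneg _), EuclideanSpace.norm_sq_eq (w e)]
    simp [w, hsg, hc2]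
  set M := ∫⁻ u in closedBall (0 : EuclideanSpace ℝ (Fin n)) δ, ENNReal.ofReal (exp (inner ℝ v u))
    with hM
  have h1 : (2 : ENNReal) ^ n * M = ∑ e : Fin n → Bool,
      ∫⁻ u in closedBall (0 : EuclideanSpace ℝ (Fin n)) δ, ENNReal.ofReal (exp (inner ℝ (w e) u)) := by
    rw [Finset.sum_congr rfl (fun e _ => (mgf_eq_of_norm_eq δ v (w e) (hw e)).symm)]
    simp [← hM]
  have hpt : ∀ u ∈ closedBall (0 : EuclideanSpace ℝ (Fin n)) δ,
      ∑ e : Fin n → Bool, ENNReal.ofReal (exp (inner ℝ (w e) u)) ≤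
      2 ^ n * ENNReal.ofReal (exp (‖v‖ ^ 2 * δ ^ 2 / (2 * n))) := by
    intro u hu
    rw [← ENNReal.ofReal_sum_of_nonneg (fun _ _ => (exp_pos _).le)]
    have e2 : (2 : ENNReal) ^ n = ENNReal.ofReal (2 ^ n) := by
      rw [ENNReal.ofReal_pow (by norm_num)]; simp
    rw [e2, ← ENNReal.ofReal_mul (by positivity)]
    apply ENNReal.ofReal_le_ofReal
    have : ∀ e : Fin n → Bool, exp (inner ℝ (w e) u) = ∏ i, exp (sg (e i) * u i) := by
      intro e
      rw [← Real.exp_sum]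
      congr 1
      simp [w, PiLp.inner_apply, mul_comm]
    simp only [this]
    rw [← Fintype.prod_sum (fun (i : Fin n) (b : Bool) => exp (sg b * u i))]
    have hu2 : ∑ i, u i ^ 2 ≤ δ ^ 2 := by
      have : ‖u‖ ≤ δ := by simpa using hu
      rw [← EuclideanSpace.real_norm_sq_eq]
      gcongr
    calc ∏ i, ∑ b, exp (sg b * u i) ≤ ∏ i, (2 * exp ((c * u i) ^ 2 / 2)) := by
          apply Finset.prod_le_prod
          · intro i _; exact Finset.sum_nonneg (fun _ _ => (exp_pos _).le)
          · intro i _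
            have := Real.cosh_le_exp_half_sq (c * u i)
            rw [Real.cosh_eq] at this
            simp [sg]
            linarith
      _ = 2 ^ n * exp (∑ i, (c * u i) ^ 2 / 2) := by
          rw [Finset.prod_mul_distrib, Real.exp_sum]; simp
      _ ≤ _ := by
          gcongr
          have : ∑ i, (c * u i) ^ 2 / 2 = c ^ 2 / 2 * ∑ i, u i ^ 2 := by
            rw [Finset.mul_sum]; congr 1; ext i; ring
          rw [this, ← hc2]
          calc c ^ 2 / 2 * ∑ i, u i ^ 2 ≤ c ^ 2 / 2 * δ ^ 2 := by gcongr
            _ = _ := by field_simp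
  have h2 : (2 : ENNReal) ^ n * M ≤ 2 ^ n * (ENNReal.ofReal (exp (‖v‖ ^ 2 * δ ^ 2 / (2 * n))) *
      volume (closedBall (0 : EuclideanSpace ℝ (Fin n)) δ)) := by
    rw [h1, ← lintegral_finsetSum]
    · refine (setLIntegral_mono measurable_const hpt).trans ?_
      rw [setLIntegral_const, mul_assoc]
    · intro e _
      fun_prop
  exact (ENNReal.mul_le_mul_iff_right (by simp) (by simp)).1 h2

lemma support_fun {n : ℕ} (K : Set (EuclideanSpace ℝ (Fin n)))
    (hKconv : Convex ℝ K) (hKcl : IsClosed K)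
    (hKball : closedBall (0 : EuclideanSpace ℝ (Fin n)) 1 ⊆ K)
    (y : EuclideanSpace ℝ (Fin n)) (hy : y ∉ K) :
    1 < gauge K y ∧ ∃ s : EuclideanSpace ℝ (Fin n), ‖s‖ ≤ 1 ∧ inner ℝ s y = gauge K y ∧
      ∀ x ∈ K, inner ℝ s x ≤ (1 : ℝ) := by
  have h0 : K ∈ nhds (0 : EuclideanSpace ℝ (Fin n)) :=
    Filter.mem_of_superset (closedBall_mem_nhds _ one_pos) hKball
  have hp : 1 < gauge K y := by
    by_contra h
    exact hy (by
      have := (gauge_le_one_iff_mem_closure hKconv h0).1 (not_lt.1 h)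
      rwa [hKcl.closure_eq] at this)
  refine ⟨hp, ?_⟩
  set p := gauge K y with hpdef
  have hp0 : 0 < p := by linarith
  have hz : p⁻¹ • y ∉ interior K := by
    intro h
    have h1 := (gauge_lt_one_iff_mem_interior hKconv h0).2 h
    rw [gauge_smul_of_nonneg (by positivity), ← hpdef, smul_eq_mul, inv_mul_cancel₀ hp0.ne'] at h1
    exact lt_irrefl _ h1
  obtain ⟨f, hf⟩ := geometric_hahn_banach_open_point hKconv.interior isOpen_interior hz
  have h0i : (0 : EuclideanSpace ℝ (Fin n)) ∈ interior K := mem_interior_iff_mem_nhds.2 h0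
  set m := f (p⁻¹ • y) with hm
  have hm0 : 0 < m := by simpa using hf 0 h0i
  have hfK : ∀ x ∈ K, f x ≤ m := by
    intro x hx
    have hx' : x ∈ closure (interior K) := by
      rw [hKconv.closure_interior_eq_closure_of_nonempty_interior ⟨0, h0i⟩]
      exact subset_closure hx
    exact closure_minimal (s := interior K) (t := {x | f x ≤ m}) (fun a ha => (hf a ha).le)
      (isClosed_le f.continuous continuous_const) hx'
  set s := m⁻¹ • (InnerProductSpace.toDual ℝ (EuclideanSpace ℝ (Fin n))).symm f with hs
  have hsx : ∀ x, inner ℝ s x = m⁻¹ * f x := by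
    intro x
    rw [hs, real_inner_smul_left, InnerProductSpace.toDual_symm_apply]
  have hsK : ∀ x ∈ K, inner ℝ s x ≤ (1 : ℝ) := by
    intro x hx
    rw [hsx, inv_mul_le_iff₀ hm0, mul_one]
    exact hfK x hx
  refine ⟨s, ?_, ?_, hsK⟩
  · by_contra h
    push Not at h
    have hs0 : 0 < ‖s‖ := by linarith
    have := hsK (‖s‖⁻¹ • s) (hKball (by
      simp [norm_smul, hs0.ne']))
    rw [real_inner_smul_right, real_inner_self_eq_norm_sq, pow_two, ← mul_assoc,
      inv_mul_cancel₀ hs0.ne', one_mul] at this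
    linarith
  · rw [hsx]
    have : f y = p * m := by
      rw [hm, map_smul, smul_eq_mul, ← mul_assoc, mul_inv_cancel₀ hp0.ne', one_mul]
    rw [this]; field_simp

lemma gauss_integrable {n : ℕ} (c : ℝ) (hc : 0 < c) :
    Integrable (fun x : EuclideanSpace ℝ (Fin n) => exp (-c * ‖x‖ ^ 2)) := by
  have := (GaussianFourier.integrable_cexp_neg_mul_sq_norm_add (V := EuclideanSpace ℝ (Fin n))
    (b := (c : ℂ)) (by simpa using hc) 0 0).norm
  refine this.congr (Filter.Eventually.of_forall fun x => ?_)
  simp only [Complex.norm_exp]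
  congr 1
  simp [← Complex.ofReal_pow]

lemma outside_le {n : ℕ} (hn : 0 < n) (K : Set (EuclideanSpace ℝ (Fin n)))
    (hKconv : Convex ℝ K) (hKcl : IsClosed K)
    (hKball : closedBall (0 : EuclideanSpace ℝ (Fin n)) 1 ⊆ K) (c : ℝ) (hc : 0 < c) :
    ∫ y in Kᶜ, exp (-(100 * n) * (gauge K y - 1)) * exp (-c * ‖y‖ ^ 2) ≤
      (1 / 8) * ∫ y in K, exp (-c * ‖y‖ ^ 2) := by
  have hn' : (0 : ℝ) < n := by exact_mod_cast hn
  have h0 : K ∈ nhds (0 : EuclideanSpace ℝ (Fin n)) :=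
    Filter.mem_of_superset (closedBall_mem_nhds _ one_pos) hKball
  have hgc : Continuous (gauge K) := continuous_gauge hKconv h0
  have hout : ∀ y ∈ Kᶜ, 1 < gauge K y := fun y hy => (support_fun K hKconv hKcl hKball y hy).1
  have hin : ∀ y ∈ K, gauge K y ≤ 1 := fun y hy => gauge_le_one_of_mem hy
  set W : EuclideanSpace ℝ (Fin n) → ℝ :=
    fun y => exp (-(100 * n) * max (gauge K y - 1) 0) * exp (-c * ‖y‖ ^ 2) with hW
  have hh := gauss_integrable (n := n) c hc
  have hWint : Integrable W := by
    refine hh.mono' (by fun_prop) (Filter.Eventually.of_forall fun y => ?_)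
    simp only [hW]
    rw [Real.norm_of_nonneg (by positivity)]
    have : exp (-(100 * n) * max (gauge K y - 1) 0) ≤ 1 := by
      rw [Real.exp_le_one_iff]
      have : 0 ≤ max (gauge K y - 1) 0 := le_max_right _ _
      nlinarith [mul_nonneg hn'.le this]
    nlinarith [exp_pos (-c * ‖y‖ ^ 2)]
  have hQ : ∫ y in Kᶜ, exp (-(100 * n) * (gauge K y - 1)) * exp (-c * ‖y‖ ^ 2) = ∫ y in Kᶜ, W y := by
    apply setIntegral_congr_fun hKcl.measurableSet.compl
    intro y hy
    simp only [hW]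
    rw [max_eq_left (by linarith [hout y hy])]
  have hH : ∫ y in K, exp (-c * ‖y‖ ^ 2) = ∫ y in K, W y := by
    apply setIntegral_congr_fun hKcl.measurableSet
    intro y hy
    simp only [hW]
    rw [max_eq_right (by linarith [hin y hy])]
    simp
  rw [hQ, hH]
  set Q := ∫ y in Kᶜ, W y
  set H := ∫ y in K, W y
  have hsum : ∫ y, W y = H + Q := (integral_add_compl hKcl.measurableSet hWint).symm
  set r : ℝ := 1 + 1 / (10 * n) with hr
  have hr1 : 1 ≤ r := by rw [hr]; simp
  have hr0 : 0 < r := by linarith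
  have hscale := Measure.integral_comp_smul (volume : Measure (EuclideanSpace ℝ (Fin n))) W r
  rw [finrank_euclideanSpace_fin, abs_of_pos (by positivity), smul_eq_mul, hsum] at hscale
  have hpt : ∀ y, W (r • y) ≤ K.indicator W y + exp (-10) * Kᶜ.indicator W y := by
    intro y
    have hg : gauge K (r • y) = r * gauge K y := gauge_smul_of_nonneg hr0.le y
    have hgn : 0 ≤ gauge K y := gauge_nonneg y
    have hnorm : -c * ‖r • y‖ ^ 2 ≤ -c * ‖y‖ ^ 2 := by
      rw [norm_smul, Real.norm_of_nonneg hr0.le, mul_pow]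
      have : 1 ≤ r ^ 2 := one_le_pow₀ hr1
      nlinarith [mul_nonneg hc.le (sq_nonneg ‖y‖)]
    by_cases hy : y ∈ K
    · simp only [indicator_of_mem hy, indicator_of_notMem (notMem_compl_iff.2 hy), mul_zero, add_zero]
      simp only [hW]
      gcongr ?_ * ?_
      · apply exp_le_exp.2
        rw [hg]
        have : max (gauge K y - 1) 0 ≤ max (r * gauge K y - 1) 0 := by
          gcongr; nlinarith
        nlinarith
      · exact exp_le_exp.2 hnorm
    · simp only [indicator_of_notMem hy, indicator_of_mem (mem_compl hy), zero_add]
      simp only [hW]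
      rw [← mul_assoc, ← Real.exp_add (-10)]
      have h1 := hout y hy
      have h2 : gauge K y + (r - 1) ≤ r * gauge K y := by nlinarith
      gcongr ?_ * ?_
      · apply exp_le_exp.2
        rw [hg, max_eq_left (by linarith), max_eq_left (by linarith)]
        have h3 : 100 * n * (r - 1) = 10 := by rw [hr]; field_simp; ring
        nlinarith
      · exact exp_le_exp.2 hnorm
  have hle : ∫ y, W (r • y) ≤ H + exp (-10) * Q := by
    calc ∫ y, W (r • y) ≤ ∫ y, (K.indicator W y + exp (-10) * Kᶜ.indicator W y) := by
          apply integral_mono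
          · exact hWint.comp_smul hr0.ne'
          · exact (hWint.indicator hKcl.measurableSet).add
              ((hWint.indicator hKcl.measurableSet.compl).const_mul _)
          · exact hpt
      _ = H + exp (-10) * Q := by
          rw [integral_add (hWint.indicator hKcl.measurableSet)
              ((hWint.indicator hKcl.measurableSet.compl).const_mul _), integral_const_mul,
            integral_indicator hKcl.measurableSet, integral_indicator hKcl.measurableSet.compl]
  rw [hscale, inv_mul_le_iff₀ (by positivity)] at hle
  have hrn : r ^ n ≤ 1.106 := by
    have h1 : r ^ n ≤ exp (1 / 10) := by
      calc r ^ n ≤ (exp (1 / (10 * n))) ^ n := by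
            gcongr
            rw [hr]
            linarith [add_one_le_exp (1 / (10 * n : ℝ))]
        _ = exp (1 / 10) := by
            rw [← Real.exp_nat_mul]; congr 1; field_simp
    have h2 : exp (1 / 10 : ℝ) ^ 10 = exp 1 := by
      rw [← Real.exp_nat_mul]; norm_num
    have h3 := Real.exp_one_lt_d9
    have : exp (1 / 10 : ℝ) ≤ 1.106 := by
      apply le_of_pow_le_pow_left₀ (n := 10) (by norm_num) (by norm_num)
      rw [h2]; norm_num at h3 ⊢; linarith
    linarith
  have he : exp (-10 : ℝ) ≤ 0.001 := by
    rw [Real.exp_neg, inv_le_comm₀ (exp_pos _) (by norm_num)]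
    have h2 : exp (10 : ℝ) = exp 1 ^ 10 := by
      rw [← Real.exp_nat_mul]; norm_num
    have h3 := Real.exp_one_gt_d9
    rw [h2]
    calc (0.001 : ℝ)⁻¹ ≤ 2 ^ 10 := by norm_num
      _ ≤ exp 1 ^ 10 := by gcongr; linarith
  have hQ0 : 0 ≤ Q := setIntegral_nonneg hKcl.measurableSet.compl (fun y _ => by positivity)
  have hH0 : 0 ≤ H := setIntegral_nonneg hKcl.measurableSet (fun y _ => by positivity)
  have : H + Q ≤ 1.106 * (H + 0.001 * Q) :=
    hle.trans (by gcongr)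
  linarith

lemma widen_le {n : ℕ} (hn : 0 < n) (K : Set (EuclideanSpace ℝ (Fin n)))
    (hKconv : Convex ℝ K) (hKcl : IsClosed K) (h0 : (0 : EuclideanSpace ℝ (Fin n)) ∈ K)
    (c : ℝ) (hc : 0 < c) :
    ∫ y in K, exp (-(c * (1 - 1 / (2 * n)) ^ 2) * ‖y‖ ^ 2) ≤ 2 * ∫ y in K, exp (-c * ‖y‖ ^ 2) := by
  have hn' : (1 : ℝ) ≤ n := by exact_mod_cast hn
  set k : ℝ := 1 - 1 / (2 * n) with hk
  have hkk : 1 / (2 * n : ℝ) ≤ 1 / 2 := by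
    apply one_div_le_one_div_of_le <;> linarith
  have hk0 : 0 < k := by rw [hk]; linarith
  have hk1 : k ≤ 1 := by rw [hk]; simp
  have hkn : 1 / 2 ≤ k ^ n := by
    have := one_add_mul_le_pow (a := -(1 / (2 * n : ℝ))) (by linarith) n
    have e : (1 : ℝ) + n * -(1 / (2 * n : ℝ)) = 1 / 2 := by field_simp; norm_num
    rw [e] at this
    rwa [hk, sub_eq_add_neg]
  have hh := gauss_integrable (n := n) c hc
  have hh2 := gauss_integrable (n := n) (c * k ^ 2) (by positivity)
  set g : EuclideanSpace ℝ (Fin n) → ℝ := fun y => exp (-c * ‖y‖ ^ 2) with hg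
  have hscale := Measure.integral_comp_smul (volume : Measure (EuclideanSpace ℝ (Fin n)))
    (K.indicator g) k
  rw [finrank_euclideanSpace_fin, abs_of_pos (by positivity), smul_eq_mul,
    integral_indicator hKcl.measurableSet] at hscale
  have hG0 : 0 ≤ ∫ y in K, g y := setIntegral_nonneg hKcl.measurableSet (fun y _ => by positivity)
  calc _ = ∫ y, K.indicator (fun y => exp (-(c * k ^ 2) * ‖y‖ ^ 2)) y := by
        rw [integral_indicator hKcl.measurableSet]
    _ ≤ ∫ y, K.indicator g (k • y) := by
        apply integral_mono (hh2.indicator hKcl.measurableSet)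
        · exact (hh.indicator hKcl.measurableSet).comp_smul hk0.ne'
        · intro y
          by_cases hy : y ∈ K
          · have : k • y ∈ K := hKconv.smul_mem_of_zero_mem h0 hy ⟨hk0.le, hk1⟩
            simp only [indicator_of_mem hy, indicator_of_mem this, hg]
            rw [norm_smul, Real.norm_of_nonneg hk0.le]
            apply le_of_eq; congr 1; ring
          · simp only [indicator_of_notMem hy]
            exact indicator_nonneg (fun _ _ => by positivity) _
    _ = (k ^ n)⁻¹ * ∫ y in K, g y := hscale
    _ ≤ 2 * ∫ y in K, g y := by
        gcongr
        rw [inv_le_comm₀ (by positivity) (by norm_num)]; linarith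

lemma inner_bound {n : ℕ} (hn : 0 < n) (K : Set (EuclideanSpace ℝ (Fin n)))
    (hKconv : Convex ℝ K) (hKcl : IsClosed K)
    (hKball : closedBall (0 : EuclideanSpace ℝ (Fin n)) 1 ⊆ K) (c : ℝ) (hc : 0 < c)
    (δ : ℝ) (h1 : δ ^ 2 * n * 4096 ^ 2 ≤ 1) (h2 : 2 * c * (δ ^ 2 * n * 4096 ^ 2) ≤ 1)
    (y : EuclideanSpace ℝ (Fin n)) (hy : y ∉ K) :
    ∫⁻ x in K, (closedBall y δ).indicator (fun x => ENNReal.ofReal (exp (-c * ‖x‖ ^ 2))) x ≤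
      volume (closedBall (0 : EuclideanSpace ℝ (Fin n)) δ) *
      ENNReal.ofReal (2 * (exp (-(100 * n) * (gauge K y - 1)) *
        exp (-(c * (1 - 1 / (2 * n)) ^ 2) * ‖y‖ ^ 2))) := by
  have hn' : (1 : ℝ) ≤ n := by exact_mod_cast hn
  obtain ⟨-, s, hs1, hsy, hsK⟩ := support_fun K hKconv hKcl hKball y hy
  set p := gauge K y with hp
  set v : EuclideanSpace ℝ (Fin n) := (100 * n : ℝ) • s + (2 * c) • y with hv
  set A : ℝ := exp (-c * ‖y‖ ^ 2) * exp (-(100 * n) * (p - 1)) with hA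
  have hpt : ∀ x ∈ K, -c * ‖x‖ ^ 2 ≤
      (-c * ‖y‖ ^ 2 + -(100 * n) * (p - 1)) + inner ℝ v (y - x) := by
    intro x hx
    have e1 : ‖x‖ ^ 2 = ‖y‖ ^ 2 - 2 * inner ℝ y (y - x) + ‖y - x‖ ^ 2 := by
      rw [← norm_sub_sq_real]; congr 2; abel
    have e2 : inner ℝ v (y - x) = 100 * n * (inner ℝ s y - inner ℝ s x) + 2 * c * inner ℝ y (y - x) := by
      rw [hv, inner_add_left, real_inner_smul_left, real_inner_smul_left, inner_sub_right s]
    have e3 := hsK x hx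
    rw [e1, e2, hsy]
    have : 0 ≤ c * ‖y - x‖ ^ 2 := by positivity
    have : 0 ≤ n * (1 - inner ℝ s x) := mul_nonneg (by linarith) (by linarith)
    nlinarith
  have step1 : ∫⁻ x in K, (closedBall y δ).indicator
      (fun x => ENNReal.ofReal (exp (-c * ‖x‖ ^ 2))) x ≤
      ∫⁻ x, ENNReal.ofReal A * (closedBall (0 : EuclideanSpace ℝ (Fin n)) δ).indicator
        (fun u => ENNReal.ofReal (exp (inner ℝ v u))) (y - x) := by
    rw [← lintegral_indicator hKcl.measurableSet]
    refine lintegral_mono fun x => ?_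
    beta_reduce
    by_cases hx : x ∈ K
    · rw [indicator_of_mem hx]
      by_cases hb : x ∈ closedBall y δ
      · have hb' : y - x ∈ closedBall (0 : EuclideanSpace ℝ (Fin n)) δ := by
          rw [mem_closedBall_zero_iff, ← dist_eq_norm, dist_comm]; exact hb
        rw [indicator_of_mem hb, indicator_of_mem hb', ← ENNReal.ofReal_mul (by positivity)]
        apply ENNReal.ofReal_le_ofReal
        rw [hA, ← Real.exp_add, ← Real.exp_add]
        exact exp_le_exp.2 (hpt x hx)
      · rw [indicator_of_notMem hb]; exact zero_le
    · rw [indicator_of_notMem hx]; exact zero_le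
  refine step1.trans ?_
  rw [lintegral_sub_left_eq_self (fun u => ENNReal.ofReal A *
      (closedBall (0 : EuclideanSpace ℝ (Fin n)) δ).indicator
        (fun u => ENNReal.ofReal (exp (inner ℝ v u))) u) y,
    lintegral_const_mul' _ _ ENNReal.ofReal_ne_top, lintegral_indicator measurableSet_closedBall]
  refine (mul_le_mul_right (mgf_le hn δ v) _).trans ?_
  rw [← mul_assoc, ← ENNReal.ofReal_mul (by positivity), mul_comm]
  refine mul_le_mul_right (ENNReal.ofReal_le_ofReal ?_) _
  have hvn : ‖v‖ ^ 2 ≤ 2 * ((100 * n) ^ 2 + (2 * c) ^ 2 * ‖y‖ ^ 2) := by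
    have t : ‖v‖ ≤ 100 * n + 2 * c * ‖y‖ := by
      refine (norm_add_le _ _).trans ?_
      rw [norm_smul, norm_smul, Real.norm_of_nonneg (by positivity), Real.norm_of_nonneg (by positivity)]
      gcongr ?_ + _
      exact mul_le_of_le_one_right (by positivity) hs1
    calc ‖v‖ ^ 2 ≤ (100 * n + 2 * c * ‖y‖) ^ 2 := by gcongr
      _ ≤ _ := by nlinarith [sq_nonneg (100 * n - 2 * c * ‖y‖)]
  have hexp : ‖v‖ ^ 2 * δ ^ 2 / (2 * n) ≤ 1 / 2 + c * (1 / n - 1 / (4 * n ^ 2)) * ‖y‖ ^ 2 := by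
    rw [div_le_iff₀ (by positivity)]
    have hd : δ ^ 2 ≤ 1 / (4096 ^ 2 * n) := by rw [le_div_iff₀ (by positivity)]; linarith
    have hd2 : 2 * c * δ ^ 2 ≤ 1 / (4096 ^ 2 * n) := by rw [le_div_iff₀ (by positivity)]; linarith
    calc ‖v‖ ^ 2 * δ ^ 2 ≤ 2 * ((100 * n) ^ 2 + (2 * c) ^ 2 * ‖y‖ ^ 2) * δ ^ 2 := by gcongr
      _ = 2 * (100 * n) ^ 2 * δ ^ 2 + 4 * c * ‖y‖ ^ 2 * (2 * c * δ ^ 2) := by ring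
      _ ≤ 2 * (100 * n) ^ 2 * (1 / (4096 ^ 2 * n)) + 4 * c * ‖y‖ ^ 2 * (1 / (4096 ^ 2 * n)) := by
          gcongr
      _ ≤ n + c * ‖y‖ ^ 2 * 1 := by
          gcongr ?_ + ?_
          · have : 2 * (100 * (n : ℝ)) ^ 2 * (1 / (4096 ^ 2 * n)) = 20000 / 4096 ^ 2 * n := by
              field_simp; norm_num
            rw [this]; nlinarith
          · rw [mul_comm 4 c, mul_assoc c, mul_comm 4, ← mul_assoc c, mul_assoc (c * _)]
            gcongr
            rw [mul_one_div, div_le_one (by positivity)]; linarith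
      _ ≤ n + c * ‖y‖ ^ 2 * (2 - 1 / (2 * n)) := by
          gcongr
          have : 1 / (2 * n : ℝ) ≤ 1 / 2 := by
            apply one_div_le_one_div_of_le <;> linarith
          linarith
      _ = _ := by field_simp; ring
  have hhalf : exp (1 / 2 : ℝ) ≤ 2 := by
    have h2 : exp (1 / 2 : ℝ) ^ 2 = exp 1 := by
      rw [← Real.exp_nat_mul]; norm_num
    have h3 := Real.exp_one_lt_d9
    apply le_of_pow_le_pow_left₀ (n := 2) (by norm_num) (by norm_num)
    rw [h2]; linarith
  calc A * exp (‖v‖ ^ 2 * δ ^ 2 / (2 * n))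
      ≤ A * exp (1 / 2 + c * (1 / n - 1 / (4 * n ^ 2)) * ‖y‖ ^ 2) := by gcongr
    _ = exp (1 / 2) * (exp (-(100 * n) * (p - 1)) *
        exp (-(c * (1 - 1 / (2 * n)) ^ 2) * ‖y‖ ^ 2)) := by
        rw [hA, ← Real.exp_add, ← Real.exp_add, ← Real.exp_add, ← Real.exp_add]
        congr 1
        field_simp
        ring
    _ ≤ _ := by gcongr

lemma loss_le {n : ℕ} (hn : 0 < n) (K : Set (EuclideanSpace ℝ (Fin n)))
    (hKconv : Convex ℝ K) (hKcl : IsClosed K)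
    (hKball : closedBall (0 : EuclideanSpace ℝ (Fin n)) 1 ⊆ K) (c : ℝ) (hc : 0 < c)
    (δ : ℝ) (h1 : δ ^ 2 * n * 4096 ^ 2 ≤ 1) (h2 : 2 * c * (δ ^ 2 * n * 4096 ^ 2) ≤ 1) :
    ∫⁻ x in K, ENNReal.ofReal (exp (-c * ‖x‖ ^ 2)) * volume (closedBall x δ \ K) ≤
      volume (closedBall (0 : EuclideanSpace ℝ (Fin n)) δ) *
      ENNReal.ofReal ((1 / 2) * ∫ x in K, exp (-c * ‖x‖ ^ 2)) := by
  have hn' : (1 : ℝ) ≤ n := by exact_mod_cast hn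
  have h0 : K ∈ nhds (0 : EuclideanSpace ℝ (Fin n)) :=
    Filter.mem_of_superset (closedBall_mem_nhds _ one_pos) hKball
  have hgc : Continuous (gauge K) := continuous_gauge hKconv h0
  have hkk : 1 / (2 * n : ℝ) ≤ 1 / 2 := by
    apply one_div_le_one_div_of_le <;> linarith
  have hk0 : 0 < (1 - 1 / (2 * n) : ℝ) := by linarith
  have hc' : 0 < c * (1 - 1 / (2 * n)) ^ 2 := by positivity
  have e1 : ∀ x, ENNReal.ofReal (exp (-c * ‖x‖ ^ 2)) * volume (closedBall x δ \ K) =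
      ∫⁻ y in Kᶜ, (closedBall y δ).indicator (fun x => ENNReal.ofReal (exp (-c * ‖x‖ ^ 2))) x := by
    intro x
    have : ∀ y, (closedBall y δ).indicator (fun x => ENNReal.ofReal (exp (-c * ‖x‖ ^ 2))) x =
        (closedBall x δ).indicator (fun _ => ENNReal.ofReal (exp (-c * ‖x‖ ^ 2))) y := by
      intro y
      simp only [indicator, mem_closedBall, dist_comm]
    simp only [this]
    rw [lintegral_indicator measurableSet_closedBall, setLIntegral_const,
      Measure.restrict_apply measurableSet_closedBall]
    rfl
  simp only [e1]
  rw [lintegral_lintegral_swap]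
  · refine (setLIntegral_mono' hKcl.measurableSet.compl
      (fun y hy => inner_bound hn K hKconv hKcl hKball c hc δ h1 h2 y hy)).trans ?_
    rw [lintegral_const_mul' _ _ (measure_closedBall_lt_top.ne)]
    refine mul_le_mul_right ?_ _
    have hint : IntegrableOn (fun y => 2 * (exp (-(100 * n) * (gauge K y - 1)) *
        exp (-(c * (1 - 1 / (2 * n)) ^ 2) * ‖y‖ ^ 2))) Kᶜ := by
      apply Integrable.const_mul
      refine (gauss_integrable (n := n) _ hc').integrableOn.mono' (by fun_prop) ?_
      filter_upwards [ae_restrict_mem hKcl.measurableSet.compl] with y hy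
      have hg := (support_fun K hKconv hKcl hKball y hy).1
      rw [Real.norm_of_nonneg (by positivity)]
      have : exp (-(100 * n) * (gauge K y - 1)) ≤ 1 := by
        rw [Real.exp_le_one_iff]
        nlinarith
      nlinarith [exp_pos (-(c * (1 - 1 / (2 * n)) ^ 2) * ‖y‖ ^ 2)]
    rw [← ofReal_integral_eq_lintegral_ofReal hint
      (Filter.Eventually.of_forall fun y => by positivity)]
    apply ENNReal.ofReal_le_ofReal
    rw [integral_const_mul]
    have b1 := outside_le hn K hKconv hKcl hKball _ hc'
    have b2 := widen_le hn K hKconv hKcl (mem_of_mem_nhds h0) c hc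
    linarith
  · apply Measurable.aemeasurable
    have : (Function.uncurry fun (x y : EuclideanSpace ℝ (Fin n)) =>
        (closedBall y δ).indicator (fun x => ENNReal.ofReal (exp (-c * ‖x‖ ^ 2))) x) =
        {q : EuclideanSpace ℝ (Fin n) × EuclideanSpace ℝ (Fin n) | dist q.1 q.2 ≤ δ}.indicator
          (fun q => ENNReal.ofReal (exp (-c * ‖q.1‖ ^ 2))) := by
      ext q
      simp [Function.uncurry, indicator]
    rw [this]
    apply Measurable.indicator (by fun_prop)
    exact (isClosed_le (by fun_prop) continuous_const).measurableSet

/-- Corollary 5.7 of the paper: for `n ≥ 2`, `0 < σ ≤ 1`, a convex body `K` containing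
the unit ball, and step size `0 < δ ≤ σ/(4096√n)`, the average local conductance of the
ball walk for the density proportional to `e^{-‖x‖²/(2σ²)}` on `K` is at least `1/2`. -/
theorem average_local_conductance_gaussian
    (n : ℕ) (hn : 2 ≤ n) (σ : ℝ) (hσ0 : 0 < σ) (hσ1 : σ ≤ 1)
    (K : Set (EuclideanSpace ℝ (Fin n)))
    (hKconv : Convex ℝ K) (hKcomp : IsCompact K)
    (hKball : closedBall (0 : EuclideanSpace ℝ (Fin n)) 1 ⊆ K)
    (δ : ℝ) (hδ : 0 < δ) (hδσ : δ ≤ σ / (4096 * Real.sqrt n))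
    (ℓ : EuclideanSpace ℝ (Fin n) → ℝ)
    (hℓ : ∀ x, ℓ x = (volume (K ∩ closedBall x δ)).toReal /
      (volume (closedBall (0 : EuclideanSpace ℝ (Fin n)) δ)).toReal) :
    (1 : ℝ) / 2 ≤ (∫ x in K, ℓ x * Real.exp (-‖x‖^2 / (2 * σ^2))) /
      (∫ x in K, Real.exp (-‖x‖^2 / (2 * σ^2))) := by
  have hn0 : 0 < n := by omega
  have hn' : (0 : ℝ) < n := by exact_mod_cast hn0
  have hKcl := hKcomp.isClosed
  have hKm := hKcl.measurableSet
  set c : ℝ := 1 / (2 * σ ^ 2) with hc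
  have hc0 : 0 < c := by positivity
  have hexp : ∀ x : EuclideanSpace ℝ (Fin n), -‖x‖ ^ 2 / (2 * σ ^ 2) = -c * ‖x‖ ^ 2 := by
    intro x; rw [hc]; ring
  simp only [hexp]
  have hsq : δ ^ 2 * n * 4096 ^ 2 ≤ σ ^ 2 := by
    have h := (le_div_iff₀ (by positivity)).1 hδσ
    have h' : (δ * (4096 * √n)) ^ 2 ≤ σ ^ 2 := by gcongr
    have e : (δ * (4096 * √n)) ^ 2 = δ ^ 2 * n * 4096 ^ 2 := by
      rw [mul_pow, mul_pow, Real.sq_sqrt hn'.le]; ring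
    rwa [e] at h'
  have h1 : δ ^ 2 * n * 4096 ^ 2 ≤ 1 := hsq.trans (pow_le_one₀ hσ0.le hσ1)
  have h2 : 2 * c * (δ ^ 2 * n * 4096 ^ 2) ≤ 1 := by
    calc 2 * c * (δ ^ 2 * n * 4096 ^ 2) ≤ 2 * c * σ ^ 2 := by gcongr
      _ = 1 := by rw [hc]; field_simp
  have hloss := loss_le hn0 K hKconv hKcl hKball c hc0 δ h1 h2
  set V := volume (closedBall (0 : EuclideanSpace ℝ (Fin n)) δ) with hV
  have hVt : V ≠ ⊤ := measure_closedBall_lt_top.ne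
  have hV0 : 0 < V := measure_closedBall_pos _ _ hδ
  have hVr : 0 < V.toReal := ENNReal.toReal_pos hV0.ne' hVt
  have hVx : ∀ x : EuclideanSpace ℝ (Fin n), volume (closedBall x δ) = V := fun x =>
    Measure.addHaar_closedBall_center _ x δ
  set G := ∫ x in K, exp (-c * ‖x‖ ^ 2) with hG
  have hgint := (gauss_integrable (n := n) c hc0).integrableOn (s := K)
  have hGpos : 0 < G := by
    rw [hG, setIntegral_pos_iff_support_of_nonneg_ae
      (Filter.Eventually.of_forall fun x => (exp_pos _).le) hgint]
    have : Function.support (fun x : EuclideanSpace ℝ (Fin n) => exp (-c * ‖x‖ ^ 2)) = univ := by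
      ext x; simp [(exp_pos _).ne']
    rw [this, univ_inter]
    exact (measure_closedBall_pos _ _ one_pos).trans_le (measure_mono hKball)
  have hsplit : ∀ x : EuclideanSpace ℝ (Fin n),
      1 - ℓ x = (volume (closedBall x δ \ K)).toReal / V.toReal := by
    intro x
    have h := measure_inter_add_sdiff (μ := volume) (closedBall x δ) hKm
    have h' := congrArg ENNReal.toReal h
    rw [hVx, ENNReal.toReal_add (measure_ne_top_of_subset inter_subset_left (by rw [hVx]; exact hVt))
      (measure_ne_top_of_subset sdiff_subset (by rw [hVx]; exact hVt)), inter_comm] at h'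
    rw [hℓ, eq_div_iff hVr.ne', sub_mul, div_mul_cancel₀ _ hVr.ne']
    linarith
  have hdm : Measurable fun x : EuclideanSpace ℝ (Fin n) => volume (closedBall x δ \ K) := by
    have hS : MeasurableSet {q : EuclideanSpace ℝ (Fin n) × EuclideanSpace ℝ (Fin n) |
        dist q.2 q.1 ≤ δ ∧ q.2 ∉ K} := by
      have hA : MeasurableSet {q : EuclideanSpace ℝ (Fin n) × EuclideanSpace ℝ (Fin n) |
          dist q.2 q.1 ≤ δ} := (isClosed_le (by fun_prop) continuous_const).measurableSet
      exact hA.inter (hKm.compl.preimage measurable_snd)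
    exact measurable_measure_prodMk_left hS
  have hℓm : Measurable ℓ := by
    have : ℓ = fun x => 1 - (volume (closedBall x δ \ K)).toReal / V.toReal := by
      ext x; rw [← hsplit]; ring
    rw [this]
    exact measurable_const.sub (hdm.ennreal_toReal.div_const _)
  have hℓ0 : ∀ x, 0 ≤ ℓ x := fun x => by rw [hℓ]; positivity
  have hℓ1 : ∀ x, 0 ≤ 1 - ℓ x := fun x => by rw [hsplit]; positivity
  have hℓint : IntegrableOn (fun x => ℓ x * exp (-c * ‖x‖ ^ 2)) K := by
    refine hgint.mono' (by fun_prop) (Filter.Eventually.of_forall fun x => ?_)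
    rw [Real.norm_of_nonneg (mul_nonneg (hℓ0 x) (exp_pos _).le)]
    nlinarith [hℓ1 x, exp_pos (-c * ‖x‖ ^ 2)]
  have hL : ∫ x in K, (1 - ℓ x) * exp (-c * ‖x‖ ^ 2) ≤ 1 / 2 * G := by
    rw [integral_eq_lintegral_of_nonneg_ae
      (Filter.Eventually.of_forall fun x => mul_nonneg (hℓ1 x) (exp_pos _).le) (by fun_prop)]
    apply ENNReal.toReal_le_of_le_ofReal (by positivity)
    rw [← ENNReal.mul_le_mul_iff_right hV0.ne' hVt, ← lintegral_const_mul' _ _ hVt]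
    refine le_trans (le_of_eq ?_) hloss
    apply lintegral_congr
    intro x
    have hne : volume (closedBall x δ \ K) ≠ ⊤ :=
      measure_ne_top_of_subset sdiff_subset (by rw [hVx]; exact hVt)
    rw [hsplit, ENNReal.ofReal_mul (by positivity), ENNReal.ofReal_div_of_pos hVr,
      ENNReal.ofReal_toReal hne, ENNReal.ofReal_toReal hVt, ← mul_assoc,
      ENNReal.mul_div_cancel hV0.ne' hVt, mul_comm]
  have hdiff : ∫ x in K, (1 - ℓ x) * exp (-c * ‖x‖ ^ 2) =
      G - ∫ x in K, ℓ x * exp (-c * ‖x‖ ^ 2) := by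
    rw [hG, ← integral_sub hgint hℓint]
    congr 1; ext x; ring
  rw [le_div_iff₀ hGpos]
  linarith
end

section
/- Let K ⊆ ℝⁿ be a convex body and let f : ℝⁿ → ℝ≥0 be a logconcave function. Define Z(a) = ∫_K f(ax) dx for a > 0. Then the function a ↦ aⁿ Z(a) is logconcave on (0, ∞). -/
open MeasureTheory Real Set Metric


theorem bm_compact {A B C : Set ℝ} (hA : IsCompact A) (hB : IsCompact B) (hAn : A.Nonempty)
    (hBn : B.Nonempty) (h : ∀ x ∈ A, ∀ y ∈ B, x + y ∈ C) :
    volume A + volume B ≤ volume C := by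
  obtain ⟨M, hM, hM'⟩ := hA.exists_isGreatest hAn
  obtain ⟨m, hm, hm'⟩ := hB.exists_isLeast hBn
  have h1 : volume ((fun x => x + m) '' A) = volume A := by
    rw [image_add_right, measure_preimage_add_right]
  have h2 : volume ((fun x => M + x) '' B) = volume B := by
    rw [image_add_left, measure_preimage_add]
  have hB' : IsCompact ((fun x => M + x) '' B) := hB.image (by fun_prop)
  rw [← h1, ← h2, ← measure_union₀ hB'.measurableSet.nullMeasurableSet]
  · apply measure_mono
    rintro _ (⟨x, hx, rfl⟩ | ⟨y, hy, rfl⟩)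
    · exact h x hx m hm
    · exact h M hM y hy
  · refine measure_mono_null (t := {M + m}) ?_ (by simp)
    rintro z ⟨⟨x, hx, rfl⟩, ⟨y, hy, hxy⟩⟩
    have := hM' hx
    have := hm' hy
    simp only [mem_singleton_iff] at *
    linarith

theorem bm_meas {A B C : Set ℝ} (hA : MeasurableSet A) (hB : MeasurableSet B) (hAn : A.Nonempty)
    (hBn : B.Nonempty) (h : ∀ x ∈ A, ∀ y ∈ B, x + y ∈ C) :
    volume A + volume B ≤ volume C := by
  obtain ⟨a, ha⟩ := hAn
  obtain ⟨b, hb⟩ := hBn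
  have key : ∀ S : Set ℝ, MeasurableSet S →
      volume S = ⨆ K : Set ℝ, ⨆ _ : K ⊆ S ∧ IsCompact K, volume K := by
    intro S hS
    rw [hS.measure_eq_iSup_isCompact]
    simp only [iSup_and]
  rw [key A hA, key B hB]
  refine ENNReal.biSup_add_biSup_le' ⟨∅, by simp⟩ ⟨∅, by simp⟩ ?_
  rintro K ⟨hK, hKc⟩ L ⟨hL, hLc⟩
  calc volume K + volume L ≤ volume (insert a K) + volume (insert b L) := by
        gcongr <;> exact subset_insert _ _
    _ ≤ volume C := by
        refine bm_compact (hKc.insert a) (hLc.insert b) (insert_nonempty _ _) (insert_nonempty _ _) ?_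
        intro x hx y hy
        exact h x (insert_subset ha hK hx) y (insert_subset hb hL hy)

theorem bm_weighted {A B C : Set ℝ} (hA : MeasurableSet A) (hB : MeasurableSet B)
    (hAn : A.Nonempty) (hBn : B.Nonempty) {l : ℝ} (hl0 : 0 < l) (hl1 : l < 1)
    (h : ∀ x ∈ A, ∀ y ∈ B, l * x + (1 - l) * y ∈ C) :
    ENNReal.ofReal l * volume A + ENNReal.ofReal (1 - l) * volume B ≤ volume C := by
  open Pointwise in
  have h1 : ENNReal.ofReal l * volume A = volume (l • A) := by
    rw [Measure.addHaar_smul]; simp [abs_of_pos hl0]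
  have h2 : ENNReal.ofReal (1 - l) * volume B = volume ((1 - l) • B) := by
    rw [Measure.addHaar_smul]; simp [abs_of_pos (sub_pos.2 hl1)]
  rw [h1, h2]
  refine bm_meas (hA.const_smul_of_ne_zero hl0.ne') (hB.const_smul_of_ne_zero (by linarith))
    hAn.smul_set hBn.smul_set ?_
  rintro _ ⟨x, hx, rfl⟩ _ ⟨y, hy, rfl⟩
  exact h x hx y hy

theorem pl_one_normalized {F G H : ℝ → ℝ} (hF : Measurable F) (hG : Measurable G)
    (hH : Measurable H) (hF0 : ∀ x, 0 ≤ F x) (hG0 : ∀ x, 0 ≤ G x) (hH0 : ∀ x, 0 ≤ H x)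
    (hF1 : ∀ x, F x ≤ 1) (hG1 : ∀ x, G x ≤ 1)
    (hFs : ∀ u < 1, ∃ x, u < F x) (hGs : ∀ u < 1, ∃ x, u < G x)
    {l : ℝ} (hl0 : 0 < l) (hl1 : l < 1)
    (h : ∀ x y, F x ^ l * G y ^ (1 - l) ≤ H (l * x + (1 - l) * y)) :
    ENNReal.ofReal l * (∫⁻ x, ENNReal.ofReal (F x)) +
      ENNReal.ofReal (1 - l) * ∫⁻ x, ENNReal.ofReal (G x) ≤ ∫⁻ x, ENNReal.ofReal (H x) := by
  rw [lintegral_eq_lintegral_meas_lt volume (ae_of_all _ hF0) hF.aemeasurable,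
    lintegral_eq_lintegral_meas_lt volume (ae_of_all _ hG0) hG.aemeasurable,
    lintegral_eq_lintegral_meas_lt volume (ae_of_all _ hH0) hH.aemeasurable]
  have mF : Measurable (fun t => volume {a : ℝ | t < F a}) :=
    Antitone.measurable fun s t hst => measure_mono fun a (ha : t < F a) => lt_of_le_of_lt hst ha
  have mG : Measurable (fun t => volume {a : ℝ | t < G a}) :=
    Antitone.measurable fun s t hst => measure_mono fun a (ha : t < G a) => lt_of_le_of_lt hst ha
  rw [← lintegral_const_mul _ mF, ← lintegral_const_mul _ mG,
    ← lintegral_add_left (mF.const_mul _)]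
  refine setLIntegral_mono' measurableSet_Ioi ?_
  intro u hu
  have hu0 : 0 < u := hu
  rcases lt_or_ge u 1 with hu1 | hu1
  · refine bm_weighted (measurableSet_lt measurable_const hF) (measurableSet_lt measurable_const hG)
      (hFs u hu1) (hGs u hu1) hl0 hl1 ?_
    intro x hx y hy
    refine lt_of_lt_of_le ?_ (h x y)
    calc u = u ^ l * u ^ (1 - l) := by rw [← rpow_add hu0]; simp
      _ < F x ^ l * G y ^ (1 - l) :=
        mul_lt_mul'' (rpow_lt_rpow hu0.le hx hl0) (rpow_lt_rpow hu0.le hy (by linarith))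
          (by positivity) (by positivity)
  · have e1 : {a : ℝ | u < F a} = ∅ := by
      ext x; simp; exact (hF1 x).trans hu1
    have e2 : {a : ℝ | u < G a} = ∅ := by
      ext x; simp; exact (hG1 x).trans hu1
    simp [e1, e2]

theorem ennreal_amgm (a b : ENNReal) {l : ℝ} (hl0 : 0 < l) (hl1 : l < 1) :
    a ^ l * b ^ (1 - l) ≤ ENNReal.ofReal l * a + ENNReal.ofReal (1 - l) * b := by
  have hl2 : 0 < 1 - l := by linarith
  by_cases ha : a = ⊤
  · subst ha
    rw [ENNReal.mul_top (by simpa using hl0)]; simp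
  by_cases hb : b = ⊤
  · subst hb
    rw [ENNReal.mul_top (by simpa using hl1)]; simp
  lift a to NNReal using ha
  lift b to NNReal using hb
  have := NNReal.geom_mean_le_arith_mean2_weighted l.toNNReal (1 - l).toNNReal a b
    (by rw [← Real.toNNReal_add hl0.le hl2.le]; simp)
  rw [Real.coe_toNNReal _ hl0.le, Real.coe_toNNReal _ hl2.le] at this
  rw [← ENNReal.coe_rpow_of_nonneg _ hl0.le, ← ENNReal.coe_rpow_of_nonneg _ hl2.le]
  simp only [ENNReal.ofReal]
  exact_mod_cast this

theorem pl_one_bdd {F G H : ℝ → ℝ} (hF : Measurable F) (hG : Measurable G)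
    (hH : Measurable H) (hF0 : ∀ x, 0 ≤ F x) (hG0 : ∀ x, 0 ≤ G x) (hH0 : ∀ x, 0 ≤ H x)
    {m : ℝ} (hF1 : ∀ x, F x ≤ m) (hG1 : ∀ x, G x ≤ m)
    {l : ℝ} (hl0 : 0 < l) (hl1 : l < 1)
    (h : ∀ x y, F x ^ l * G y ^ (1 - l) ≤ H (l * x + (1 - l) * y)) :
    (∫⁻ x, ENNReal.ofReal (F x)) ^ l *
      (∫⁻ x, ENNReal.ofReal (G x)) ^ (1 - l) ≤ ∫⁻ x, ENNReal.ofReal (H x) := by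
  have hl2 : 0 < 1 - l := by linarith
  by_cases zF : ∀ x, F x = 0
  · simp [zF, hl0]
  by_cases zG : ∀ x, G x = 0
  · simp [zG, hl1]
  push Not at zF zG
  have bF : BddAbove (range F) := ⟨m, by rintro _ ⟨x, rfl⟩; exact hF1 x⟩
  have bG : BddAbove (range G) := ⟨m, by rintro _ ⟨x, rfl⟩; exact hG1 x⟩
  obtain ⟨a, ha⟩ : ∃ a, a = ⨆ x, F x := ⟨_, rfl⟩
  obtain ⟨b, hb⟩ : ∃ b, b = ⨆ x, G x := ⟨_, rfl⟩
  have leF : ∀ x, F x ≤ a := fun x => ha ▸ le_ciSup bF x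
  have leG : ∀ x, G x ≤ b := fun x => hb ▸ le_ciSup bG x
  have a0 : 0 < a := by
    obtain ⟨x, hx⟩ := zF
    exact (lt_of_le_of_ne (hF0 x) hx.symm).trans_le (leF x)
  have b0 : 0 < b := by
    obtain ⟨x, hx⟩ := zG
    exact (lt_of_le_of_ne (hG0 x) hx.symm).trans_le (leG x)
  set c := a ^ l * b ^ (1 - l) with hc
  have c0 : 0 < c := by positivity
  have key := pl_one_normalized (F := fun x => F x / a) (G := fun x => G x / b)
    (H := fun x => H x / c) (hF.div_const a) (hG.div_const b) (hH.div_const c)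
    (fun x => div_nonneg (hF0 x) a0.le) (fun x => div_nonneg (hG0 x) b0.le)
    (fun x => div_nonneg (hH0 x) c0.le)
    (fun x => (div_le_one a0).2 (leF x)) (fun x => (div_le_one b0).2 (leG x))
    (by
      intro u hu
      have : u * a < ⨆ x, F x := by rw [← ha]; nlinarith
      obtain ⟨x, hx⟩ := exists_lt_of_lt_ciSup this
      exact ⟨x, (lt_div_iff₀ a0).2 hx⟩)
    (by
      intro u hu
      have : u * b < ⨆ x, G x := by rw [← hb]; nlinarith
      obtain ⟨x, hx⟩ := exists_lt_of_lt_ciSup this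
      exact ⟨x, (lt_div_iff₀ b0).2 hx⟩)
    hl0 hl1
    (by
      intro x y
      rw [div_rpow (hF0 x) a0.le, div_rpow (hG0 y) b0.le, div_mul_div_comm, ← hc]
      gcongr
      exact h x y)
  have sc : ∀ (P : ℝ → ℝ), Measurable P → ∀ d : ℝ, 0 < d →
      ∫⁻ x, ENNReal.ofReal (P x) = ENNReal.ofReal d * ∫⁻ x, ENNReal.ofReal (P x / d) := by
    intro P hP d hd
    rw [← lintegral_const_mul _ (by fun_prop)]
    refine lintegral_congr fun x => ?_
    rw [← ENNReal.ofReal_mul hd.le, mul_div_cancel₀ _ hd.ne']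
  rw [sc F hF a a0, sc G hG b b0, sc H hH c c0, ENNReal.mul_rpow_of_nonneg _ _ hl0.le,
    ENNReal.mul_rpow_of_nonneg _ _ hl2.le, mul_mul_mul_comm,
    ENNReal.ofReal_rpow_of_pos a0, ENNReal.ofReal_rpow_of_pos b0,
    ← ENNReal.ofReal_mul (by positivity), ← hc]
  gcongr
  exact (ennreal_amgm _ _ hl0 hl1).trans key

open scoped ENNReal

theorem pl_one {F G H : ℝ → ℝ≥0∞} (hF : Measurable F) (hG : Measurable G)
    (hH : Measurable H) {l : ℝ} (hl0 : 0 < l) (hl1 : l < 1)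
    (h : ∀ x y, F x ^ l * G y ^ (1 - l) ≤ H (l * x + (1 - l) * y)) :
    (∫⁻ x, F x) ^ l * (∫⁻ x, G x) ^ (1 - l) ≤ ∫⁻ x, H x := by
  have hl2 : 0 < 1 - l := by linarith
  have trunc : ∀ P : ℝ → ℝ≥0∞, Measurable P →
      Filter.Tendsto (fun m : ℕ => ∫⁻ x, min (P x) m) Filter.atTop (nhds (∫⁻ x, P x)) := by
    intro P hP
    refine lintegral_tendsto_of_tendsto_of_monotone
      (fun m => (hP.min measurable_const).aemeasurable) (ae_of_all _ ?_) (ae_of_all _ ?_)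
    · intro x i j hij
      dsimp only
      gcongr
    · intro x
      have := (tendsto_const_nhds (x := P x)).min ENNReal.tendsto_nat_nhds_top
      simpa using this
  have step : ∀ m : ℕ, (∫⁻ x, min (F x) m) ^ l * (∫⁻ x, min (G x) m) ^ (1 - l) ≤ ∫⁻ x, H x := by
    intro m
    have fin : ∀ a : ℝ≥0∞, min a (m : ℝ≥0∞) ≠ ⊤ := fun a =>
      ne_top_of_le_ne_top (ENNReal.natCast_ne_top m) (min_le_right _ _)
    have bd : ∀ a : ℝ≥0∞, (min a (m : ℝ≥0∞)).toReal ≤ m := fun a => by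
      simpa using ENNReal.toReal_mono (ENNReal.natCast_ne_top m) (min_le_right a m)
    have := pl_one_bdd (F := fun x => (min (F x) m).toReal) (G := fun x => (min (G x) m).toReal)
      (H := fun x => (min (H x) m).toReal) (hF.min measurable_const).ennreal_toReal
      (hG.min measurable_const).ennreal_toReal (hH.min measurable_const).ennreal_toReal
      (fun _ => ENNReal.toReal_nonneg) (fun _ => ENNReal.toReal_nonneg)
      (fun _ => ENNReal.toReal_nonneg) (fun x => bd _) (fun x => bd _) hl0 hl1
      (by
        intro x y
        rw [ENNReal.toReal_rpow, ENNReal.toReal_rpow, ← ENNReal.toReal_mul]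
        refine ENNReal.toReal_mono (fin _) (le_min ?_ ?_)
        · refine le_trans ?_ (h x y)
          gcongr <;> exact min_le_left _ _
        · calc min (F x) (m : ℝ≥0∞) ^ l * min (G y) (m : ℝ≥0∞) ^ (1 - l)
              ≤ (m : ℝ≥0∞) ^ l * (m : ℝ≥0∞) ^ (1 - l) := by
                gcongr <;> exact min_le_right _ _
            _ = m := by
                rw [← ENNReal.rpow_add_of_nonneg _ _ hl0.le hl2.le]; simp)
    simp only [ENNReal.ofReal_toReal (fin _)] at this
    exact this.trans (lintegral_mono fun x => min_le_left _ _)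
  by_cases z1 : ∫⁻ x, F x = 0
  · simp [z1, hl0]
  by_cases z2 : ∫⁻ x, G x = 0
  · simp [z2, hl1]
  refine le_of_tendsto' (ENNReal.Tendsto.mul ((ENNReal.continuous_rpow_const.tendsto _).comp (trunc F hF))
    (Or.inl ?_) ((ENNReal.continuous_rpow_const.tendsto _).comp (trunc G hG)) (Or.inl ?_)) step
  · simp [ENNReal.rpow_eq_zero_iff, z1, hl0, not_lt.2 hl0.le]
  · simp [ENNReal.rpow_eq_zero_iff, z2, hl1.le]

theorem pl_pi (n : ℕ) : ∀ {F G H : (Fin n → ℝ) → ℝ≥0∞}, Measurable F → Measurable G →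
    Measurable H → ∀ {l : ℝ}, 0 < l → l < 1 →
    (∀ x y, F x ^ l * G y ^ (1 - l) ≤ H (l • x + (1 - l) • y)) →
    (∫⁻ x, F x) ^ l * (∫⁻ x, G x) ^ (1 - l) ≤ ∫⁻ x, H x := by
  induction n with
  | zero =>
    intro F G H hF hG hH l hl0 hl1 h
    have : ∀ P : (Fin 0 → ℝ) → ℝ≥0∞, ∫⁻ x, P x = P 0 := by
      intro P
      rw [volume_pi, Measure.pi_of_empty _ 0, lintegral_dirac]
    rw [this, this, this]
    simpa using h 0 0
  | succ n ih =>
    intro F G H hF hG hH l hl0 hl1 h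
    let e := (MeasurableEquiv.piFinSuccAbove (fun _ : Fin (n + 1) => ℝ) 0).symm
    have he : MeasurePreserving e :=
      (volume_preserving_piFinSuccAbove (fun _ : Fin (n + 1) => ℝ) 0).symm
    have hlin : ∀ (x y : ℝ × (Fin n → ℝ)), l • e x + (1 - l) • e y = e (l • x + (1 - l) • y) := by
      intro x y
      ext i
      refine Fin.cases ?_ (fun j => ?_) i <;> simp [e, MeasurableEquiv.piFinSuccAbove]
    have fub : ∀ P : (Fin (n + 1) → ℝ) → ℝ≥0∞, Measurable P →
        ∫⁻ x, P x = ∫⁻ u : ℝ, ∫⁻ v : Fin n → ℝ, P (e (u, v)) := by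
      intro P hP
      rw [← he.lintegral_comp hP]
      exact lintegral_prod _ (hP.comp e.measurable).aemeasurable
    have meas : ∀ P : (Fin (n + 1) → ℝ) → ℝ≥0∞, Measurable P →
        Measurable fun u : ℝ => ∫⁻ v : Fin n → ℝ, P (e (u, v)) := by
      intro P hP
      exact (hP.comp e.measurable).lintegral_prod_right'
    rw [fub F hF, fub G hG, fub H hH]
    refine pl_one (meas F hF) (meas G hG) (meas H hH) hl0 hl1 ?_
    intro x y
    refine ih (hF.comp (e.measurable.comp measurable_prodMk_left))
      (hG.comp (e.measurable.comp measurable_prodMk_left))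
      (hH.comp (e.measurable.comp measurable_prodMk_left)) hl0 hl1 ?_
    intro v w
    have := h (e (x, v)) (e (y, w))
    rw [hlin] at this
    exact this

theorem pl_euclid (n : ℕ) {F G H : EuclideanSpace ℝ (Fin n) → ℝ≥0∞}
    (hH : AEMeasurable H) {l : ℝ} (hl0 : 0 < l) (hl1 : l < 1)
    (h : ∀ x y, F x ^ l * G y ^ (1 - l) ≤ H (l • x + (1 - l) • y)) :
    (∫⁻ x, F x) ^ l * (∫⁻ x, G x) ^ (1 - l) ≤ ∫⁻ x, H x := by
  classical
  have hl2 : 0 < 1 - l := by linarith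
  obtain ⟨F', mF, leF, eF⟩ := exists_measurable_le_lintegral_eq volume F
  obtain ⟨G', mG, leG, eG⟩ := exists_measurable_le_lintegral_eq volume G
  obtain ⟨H', mH, leH, eH⟩ : ∃ H' : EuclideanSpace ℝ (Fin n) → ℝ≥0∞, Measurable H' ∧
      (∀ x, H x ≤ H' x) ∧ ∫⁻ x, H' x = ∫⁻ x, H x := by
    have hnull : volume {x | ¬ H x = hH.mk H x} = 0 := hH.ae_eq_mk
    let N := toMeasurable volume {x | ¬ H x = hH.mk H x}
    have hN : volume N = 0 := by rw [measure_toMeasurable]; exact hnull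
    refine ⟨fun x => if x ∈ N then ⊤ else hH.mk H x,
      Measurable.ite (measurableSet_toMeasurable _ _) measurable_const hH.measurable_mk, ?_, ?_⟩
    · intro x
      by_cases hx : x ∈ N
      · simp [hx]
      · have : H x = hH.mk H x := by
          by_contra hne
          exact hx (subset_toMeasurable _ _ hne)
        simp [hx, this]
    · refine lintegral_congr_ae ?_
      have hN' : ∀ᵐ x, x ∉ N := measure_eq_zero_iff_ae_notMem.1 hN
      filter_upwards [hN', hH.ae_eq_mk] with x hx hx'
      simp [hx, hx']
  rw [eF, eG, ← eH]
  have vp := PiLp.volume_preserving_toLp (Fin n)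
  rw [← vp.lintegral_comp mF, ← vp.lintegral_comp mG, ← vp.lintegral_comp mH]
  refine pl_pi n (mF.comp vp.measurable) (mG.comp vp.measurable) (mH.comp vp.measurable) hl0 hl1 ?_
  intro x y
  have := (h (WithLp.toLp 2 x) (WithLp.toLp 2 y)).trans (leH _)
  refine le_trans ?_ this
  gcongr
  · exact leF _
  · exact leG _

section lc
variable {n : ℕ} {f : EuclideanSpace ℝ (Fin n) → ℝ}

theorem lc_convex (hf0 : ∀ x, 0 ≤ f x)
    (hlc : ∀ x y : EuclideanSpace ℝ (Fin n), ∀ l ∈ Icc (0:ℝ) 1,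
      f x ^ l * f y ^ (1 - l) ≤ f (l • x + (1 - l) • y)) (c : ℝ) :
    Convex ℝ {x | c ≤ f x} := by
  intro x hx y hy a b ha hb hab
  obtain rfl : b = 1 - a := by linarith
  simp only [mem_ofPred_eq] at *
  rcases le_or_gt c 0 with hc | hc
  · exact hc.trans (hf0 _)
  · refine le_trans ?_ (hlc x y a ⟨ha, by linarith⟩)
    calc c = c ^ a * c ^ (1 - a) := by rw [← rpow_add hc]; simp
      _ ≤ _ := by
        have := rpow_nonneg (hf0 x) a
        gcongr

theorem lc_aemeasurable (hf0 : ∀ x, 0 ≤ f x)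
    (hlc : ∀ x y : EuclideanSpace ℝ (Fin n), ∀ l ∈ Icc (0:ℝ) 1,
      f x ^ l * f y ^ (1 - l) ≤ f (l • x + (1 - l) • y)) : AEMeasurable f := by
  apply NullMeasurable.aemeasurable
  have h1 : @Measurable (NullMeasurableSpace (EuclideanSpace ℝ (Fin n)) volume) ℝ _ _ f :=
    measurable_of_Ici fun c => (lc_convex hf0 hlc c).nullMeasurableSet volume
  exact fun s hs => h1 hs

theorem lc_lintegral_lt_top (hf0 : ∀ x, 0 ≤ f x)
    (hlc : ∀ x y : EuclideanSpace ℝ (Fin n), ∀ l ∈ Icc (0:ℝ) 1,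
      f x ^ l * f y ^ (1 - l) ≤ f (l • x + (1 - l) • y))
    {K : Set (EuclideanSpace ℝ (Fin n))} (hK : IsCompact K) :
    ∫⁻ x in K, ENNReal.ofReal (f x) ≠ ⊤ := by
  by_cases hcase : ∃ e > 0, (interior {x | e ≤ f x}).Nonempty
  · obtain ⟨e, he, x0, hx0⟩ := hcase
    obtain ⟨r, hr, hball⟩ := Metric.isOpen_iff.1 isOpen_interior x0 hx0
    have hball' : ∀ z, dist z x0 < r → e ≤ f z := fun z hz => by
      have h5 : z ∈ {x | e ≤ f x} := interior_subset (hball hz)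
      exact h5
    obtain ⟨R, hR⟩ := hK.isBounded.subset_ball x0
    obtain ⟨d, hd, hdR⟩ : ∃ d : ℝ, 0 < d ∧ d * (|R| + 1) < r := by
      refine ⟨r / (2 * (|R| + 1)), by positivity, ?_⟩
      have : 0 < |R| + 1 := by positivity
      field_simp
      norm_num
    set p : ℝ := d / (1 + d) with hp
    have hp0 : 0 < p := by positivity
    have hp1 : p < 1 := by rw [hp, div_lt_one (by positivity)]; linarith
    have hbound : ∀ y ∈ K, f y ≤ (f x0 / e ^ (1 - p)) ^ p⁻¹ := by
      intro y hy
      have hyR : dist y x0 < R := hR hy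
      have hz : e ≤ f (x0 - d • (y - x0)) := by
        apply hball'
        rw [dist_eq_norm, sub_sub_cancel_left, norm_neg, norm_smul, ← dist_eq_norm,
          Real.norm_of_nonneg hd.le]
        refine lt_of_le_of_lt ?_ hdR
        have := le_abs_self R
        gcongr
        linarith
      have h1 := hlc y (x0 - d • (y - x0)) p ⟨hp0.le, hp1.le⟩
      have h2 : p • y + (1 - p) • (x0 - d • (y - x0)) = x0 := by
        have e1 : (1 - p) * d = p := by rw [hp]; field_simp; ring
        rw [smul_sub, smul_smul, e1]
        module
      rw [h2] at h1
      have h3 : f y ^ p * e ^ (1 - p) ≤ f x0 := by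
        refine le_trans ?_ h1
        have := rpow_nonneg (hf0 y) p
        gcongr
      have h4 : f y ^ p ≤ f x0 / e ^ (1 - p) := (le_div_iff₀ (by positivity)).2 h3
      calc f y = (f y ^ p) ^ p⁻¹ := (rpow_rpow_inv (hf0 y) hp0.ne').symm
        _ ≤ _ := rpow_le_rpow (rpow_nonneg (hf0 y) p) h4 (by positivity)
    have : ∫⁻ x in K, ENNReal.ofReal (f x) ≤
        ∫⁻ x in K, ENNReal.ofReal ((f x0 / e ^ (1 - p)) ^ p⁻¹) :=
      setLIntegral_mono' hK.measurableSet fun x hx => ENNReal.ofReal_le_ofReal (hbound x hx)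
    refine ne_top_of_le_ne_top ?_ this
    rw [setLIntegral_const]
    exact ENNReal.mul_ne_top ENNReal.ofReal_ne_top hK.measure_lt_top.ne
  · push Not at hcase
    have hnull : ∀ k : ℕ, volume {x | 1 / ((k : ℝ) + 1) ≤ f x} = 0 := by
      intro k
      have hc := lc_convex hf0 hlc (1 / ((k : ℝ) + 1))
      refine measure_mono_null ?_ (hc.addHaar_frontier volume)
      rw [frontier, hcase _ (by positivity), sdiff_empty]
      exact subset_closure
    have hz : ∀ᵐ x, f x = 0 := by
      have := measure_iUnion_null hnull
      filter_upwards [measure_eq_zero_iff_ae_notMem.1 this] with x hx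
      by_contra hne
      have hpos : 0 < f x := lt_of_le_of_ne (hf0 x) (Ne.symm hne)
      obtain ⟨k, hk⟩ := exists_nat_one_div_lt hpos
      exact hx (mem_iUnion.2 ⟨k, hk.le⟩)
    have : ∫⁻ x in K, ENNReal.ofReal (f x) = 0 := by
      rw [← lintegral_zero]
      refine lintegral_congr_ae (ae_restrict_of_ae ?_)
      filter_upwards [hz] with x hx
      simp [hx]
    simp [this]

end lc

/-- Logconcavity of `a ↦ aⁿ Z(a)` (Lemma 6.2 of the paper, from Lovász–Vempala): for a
convex body `K ⊆ ℝⁿ` and a logconcave function `f`, with `Z(a) = ∫_K f(ax) dx`, the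
function `a ↦ aⁿ Z(a)` is logconcave on `(0, ∞)`. -/
theorem dilated_integral_logconcave
    (n : ℕ)
    (K : Set (EuclideanSpace ℝ (Fin n)))
    (hKconv : Convex ℝ K) (hKcomp : IsCompact K) (hKne : (interior K).Nonempty)
    (f : EuclideanSpace ℝ (Fin n) → ℝ)
    (hf0 : ∀ x, 0 ≤ f x)
    (hlc : ∀ x y : EuclideanSpace ℝ (Fin n), ∀ l ∈ Icc (0:ℝ) 1,
      f x ^ l * f y ^ (1 - l) ≤ f (l • x + (1 - l) • y))
    (Z : ℝ → ℝ) (hZ : ∀ a : ℝ, Z a = ∫ x in K, f (a • x))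
    (s t : ℝ) (hs : 0 < s) (ht : 0 < t) (l : ℝ) (hl : l ∈ Icc (0:ℝ) 1) :
    (s ^ n * Z s) ^ l * (t ^ n * Z t) ^ (1 - l) ≤
      (l * s + (1 - l) * t) ^ n * Z (l * s + (1 - l) * t) := by
  rcases eq_or_lt_of_le hl.1 with h0 | hl0
  · subst h0; simp
  rcases eq_or_lt_of_le hl.2 with h1 | hl1
  · subst h1; simp
  have hl2 : 0 < 1 - l := by linarith
  have hr : 0 < l * s + (1 - l) * t := by positivity
  have hfm := lc_aemeasurable hf0 hlc
  open Pointwise in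
  have hKs : ∀ a : ℝ, IsCompact (a • K) := fun a => hKcomp.smul a
  open Pointwise in
  have key : ∀ a : ℝ, 0 < a →
      a ^ n * Z a = (∫⁻ x, (a • K).indicator (fun x => ENNReal.ofReal (f x)) x).toReal := by
    intro a ha
    rw [hZ, Measure.setIntegral_comp_smul_of_pos _ _ _ ha, lintegral_indicator (hKs a).measurableSet,
      integral_eq_lintegral_of_nonneg_ae (ae_of_all _ hf0) hfm.aestronglyMeasurable.restrict]
    simp only [finrank_euclideanSpace, Fintype.card_fin, smul_eq_mul]
    rw [← mul_assoc, mul_inv_cancel₀ (by positivity), one_mul]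
  rw [key s hs, key t ht, key _ hr, ENNReal.toReal_rpow, ENNReal.toReal_rpow, ← ENNReal.toReal_mul]
  refine ENNReal.toReal_mono ?_ (pl_euclid n ?_ hl0 hl1 ?_)
  · rw [lintegral_indicator (hKs _).measurableSet]
    exact lc_lintegral_lt_top hf0 hlc (hKs _)
  · exact hfm.ennreal_ofReal.indicator (hKs _).measurableSet
  · intro x y
    open Pointwise in
    by_cases hx : x ∈ s • K
    swap
    · simp [indicator_of_notMem hx, hl0]
    open Pointwise in
    by_cases hy : y ∈ t • K
    swap
    · simp [indicator_of_notMem hy, hl1]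
    open Pointwise in
    have hxy : l • x + (1 - l) • y ∈ (l * s + (1 - l) * t) • K := by
      rw [hKconv.add_smul (by positivity) (by positivity), mul_smul, mul_smul]
      exact Set.add_mem_add (Set.smul_mem_smul_set hx) (Set.smul_mem_smul_set hy)
    rw [indicator_of_mem hx, indicator_of_mem hy, indicator_of_mem hxy,
      ENNReal.ofReal_rpow_of_nonneg (hf0 x) hl0.le, ENNReal.ofReal_rpow_of_nonneg (hf0 y) hl2.le,
      ← ENNReal.ofReal_mul (rpow_nonneg (hf0 x) l)]
    exact ENNReal.ofReal_le_ofReal (hlc x y l hl)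
end
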